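/- arXiv:2008.06200 — 2 statements merged into one kernel-verified Lean document; each statement's English description precedes it below -/
import Mathlib

section
/- For every real s > 1 and every natural number x, the x-th moment of the mixing density f(p) = (-ln p)^(s-1) / (ζ(s) Γ(s) (1-p)) on (0,1) satisfies ∫₀¹ p^x f(p) dp = 1 - (1/ζ(s)) Σ_{i=0}^{x-1} (i+1)^(-s), which equals ζ(s, x+1)/ζ(s), where ζ(s, x+1) = Σ_{i=x}^∞ (i+1)^(-s) is the Hurwitz zeta function. -/
open MeasureTheory

/-- The Riemann zeta function for real `s > 1`, defined as `∑_{x=0}^∞ (x+1)^(-s)`. -/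
noncomputable def zetaS (s : ℝ) : ℝ := ∑' x : ℕ, ((x : ℝ) + 1) ^ (-s)

/-- The Hurwitz zeta function `ζ(s, n+1) = ∑_{i=n}^∞ (i+1)^(-s)`. -/
noncomputable def hurwitzS (s : ℝ) (n : ℕ) : ℝ := ∑' i : ℕ, ((n : ℝ) + (i : ℝ) + 1) ^ (-s)

/-! Expanding `1 / (1 - p)` as a geometric series turns the integral of
`p ^ (a - 1) / (1 - p) * (-log p) ^ (s - 1)` into a sum of log-moments of the uniform distribution,
each of which is a Gamma integral after the substitution `p = exp (-t)`. -/

lemma summable_nat_add_rpow_neg {s a : ℝ} (ha : 0 ≤ a) :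
    Summable (fun n : ℕ ↦ ((n : ℝ) + a) ^ (-s)) ↔ 1 < s := by
  rw [← Real.summable_one_div_nat_add_rpow a s]
  refine summable_congr fun n ↦ ?_
  have hn : 0 ≤ (n : ℝ) + a := by positivity
  rw [abs_of_nonneg hn, Real.rpow_neg hn, one_div]

section Substitution

variable {E : Type*} [NormedAddCommGroup E] [NormedSpace ℝ E]

lemma integral_comp_exp_Iio (g : ℝ → E) (c : ℝ) :
    ∫ u in Set.Iio c, Real.exp u • g (Real.exp u) = ∫ p in Set.Ioo 0 (Real.exp c), g p := by
  rw [← Real.image_exp_Iio, integral_image_eq_integral_abs_deriv_smul measurableSet_Iio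
    (fun u _ ↦ (Real.hasDerivAt_exp u).hasDerivWithinAt) Real.exp_injective.injOn]
  simp only [Real.abs_exp]

lemma integral_comp_exp_neg_Ioi (g : ℝ → E) (c : ℝ) :
    ∫ t in Set.Ioi c, Real.exp (-t) • g (Real.exp (-t))
      = ∫ p in Set.Ioo 0 (Real.exp (-c)), g p := by
  rw [integral_comp_neg_Ioi c fun u ↦ Real.exp u • g (Real.exp u), integral_Iic_eq_integral_Iio,
    integral_comp_exp_Iio]

end Substitution

lemma integral_rpow_mul_neg_log_rpow {s a : ℝ} (hs : 0 < s) (ha : 0 < a) :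
    ∫ p in Set.Ioo (0 : ℝ) 1, p ^ (a - 1) * (-Real.log p) ^ (s - 1)
      = a ^ (-s) * Real.Gamma s := by
  let g (p : ℝ) : ℝ := p ^ (a - 1) * (-Real.log p) ^ (s - 1)
  have hg (t : ℝ) :
      Real.exp (-t) • g (Real.exp (-t)) = t ^ (s - 1) * Real.exp (-(a * t)) := by
    simp only [g]
    rw [Real.log_exp, neg_neg, ← Real.exp_mul, smul_eq_mul, ← mul_assoc, ← Real.exp_add, mul_comm]
    ring_nf
  calc ∫ p in Set.Ioo (0 : ℝ) 1, g p
      = ∫ t in Set.Ioi (0 : ℝ), Real.exp (-t) • g (Real.exp (-t)) := by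
        rw [integral_comp_exp_neg_Ioi, neg_zero, Real.exp_zero]
    _ = ∫ t in Set.Ioi (0 : ℝ), t ^ (s - 1) * Real.exp (-(a * t)) := by simp only [hg]
    _ = a ^ (-s) * Real.Gamma s := by
        rw [Real.integral_rpow_mul_exp_neg_mul_Ioi hs ha, one_div, Real.inv_rpow ha.le,
          Real.rpow_neg ha.le]

lemma hasSum_rpow_add_sub_one {p : ℝ} (hp : p ∈ Set.Ioo (0 : ℝ) 1) (a : ℝ) :
    HasSum (fun n : ℕ ↦ p ^ ((n : ℝ) + a - 1)) (p ^ (a - 1) / (1 - p)) := by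
  have hterm (n : ℕ) : p ^ ((n : ℝ) + a - 1) = p ^ (a - 1) * p ^ n := by
    rw [← Real.rpow_add_natCast hp.1.ne']
    ring_nf
  simpa only [hterm, div_eq_mul_inv] using
    (hasSum_geometric_of_lt_one hp.1.le hp.2).mul_left (p ^ (a - 1))

lemma integral_rpow_div_one_sub_mul_neg_log_rpow {s a : ℝ} (hs : 1 < s) (ha : 0 < a) :
    ∫ p in Set.Ioo (0 : ℝ) 1, p ^ (a - 1) / (1 - p) * (-Real.log p) ^ (s - 1)
      = (∑' n : ℕ, ((n : ℝ) + a) ^ (-s)) * Real.Gamma s := by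
  let F (n : ℕ) (p : ℝ) : ℝ := p ^ ((n : ℝ) + a - 1) * (-Real.log p) ^ (s - 1)
  have hs₀ : 0 < s := zero_lt_one.trans hs
  have hF_integral (n : ℕ) :
      ∫ p in Set.Ioo (0 : ℝ) 1, F n p = ((n : ℝ) + a) ^ (-s) * Real.Gamma s :=
    integral_rpow_mul_neg_log_rpow hs₀ (by positivity)
  have hF_integrable (n : ℕ) : Integrable (F n) (volume.restrict (Set.Ioo 0 1)) := by
    refine .of_integral_ne_zero ?_
    rw [hF_integral]
    positivity
  have hF_norm (n : ℕ) :
      ∫ p in Set.Ioo (0 : ℝ) 1, ‖F n p‖ = ∫ p in Set.Ioo (0 : ℝ) 1, F n p := by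
    refine setIntegral_congr_fun measurableSet_Ioo fun p hp ↦ Real.norm_of_nonneg ?_
    exact mul_nonneg (Real.rpow_nonneg hp.1.le _)
      (Real.rpow_nonneg (neg_nonneg.2 (Real.log_nonpos hp.1.le hp.2.le)) _)
  have hF_summable : Summable fun n ↦ ∫ p in Set.Ioo (0 : ℝ) 1, ‖F n p‖ := by
    simpa only [hF_norm, hF_integral] using
      ((summable_nat_add_rpow_neg ha.le).2 hs).mul_right (Real.Gamma s)
  calc ∫ p in Set.Ioo (0 : ℝ) 1, p ^ (a - 1) / (1 - p) * (-Real.log p) ^ (s - 1)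
      = ∫ p in Set.Ioo (0 : ℝ) 1, ∑' n, F n p :=
        setIntegral_congr_fun measurableSet_Ioo fun p hp ↦
          ((hasSum_rpow_add_sub_one hp a).mul_right _).tsum_eq.symm
    _ = ∑' n, ∫ p in Set.Ioo (0 : ℝ) 1, F n p :=
        (integral_tsum_of_summable_integral_norm hF_integrable hF_summable).symm
    _ = (∑' n : ℕ, ((n : ℝ) + a) ^ (-s)) * Real.Gamma s := by
        simp only [hF_integral, tsum_mul_right]

lemma zetaS_pos {s : ℝ} (hs : 1 < s) : 0 < zetaS s :=
  ((summable_nat_add_rpow_neg zero_le_one).2 hs).tsum_pos (fun n ↦ by positivity) 0 (by simp)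

lemma hurwitzS_eq_tsum (s : ℝ) (x : ℕ) :
    hurwitzS s x = ∑' n : ℕ, ((n : ℝ) + (x + 1)) ^ (-s) :=
  tsum_congr fun n ↦ by ring_nf

lemma sum_range_add_hurwitzS {s : ℝ} (hs : 1 < s) (x : ℕ) :
    ∑ i ∈ Finset.range x, ((i : ℝ) + 1) ^ (-s) + hurwitzS s x = zetaS s := by
  rw [zetaS, ← ((summable_nat_add_rpow_neg zero_le_one).2 hs).sum_add_tsum_nat_add x,
    hurwitzS_eq_tsum]
  simp only [Nat.cast_add, add_assoc]

/-- The mixing density `f` expressing the Zeta(`s`) distribution as a mixture of Geometric(`p`)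
distributions, as a function on all of `ℝ`; only its values on `(0, 1)` are meaningful. -/
noncomputable def zetaMixingDensity (s p : ℝ) : ℝ :=
  (-Real.log p) ^ (s - 1) / (zetaS s * Real.Gamma s * (1 - p))

lemma integral_pow_mul_zetaMixingDensity {s : ℝ} (hs : 1 < s) (x : ℕ) :
    ∫ p in Set.Ioo (0 : ℝ) 1, p ^ x * zetaMixingDensity s p = hurwitzS s x / zetaS s := by
  have hΓ : Real.Gamma s ≠ 0 := (Real.Gamma_pos_of_pos (zero_lt_one.trans hs)).ne'
  have hintegrand (p : ℝ) :
      p ^ x * zetaMixingDensity s p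
        = p ^ ((x + 1 : ℝ) - 1) / (1 - p) * (-Real.log p) ^ (s - 1)
          / (zetaS s * Real.Gamma s) := by
    rw [zetaMixingDensity, add_sub_cancel_right, Real.rpow_natCast, mul_comm _ (1 - p), ← div_div,
      mul_div_assoc', mul_div_assoc', mul_div_right_comm]
  simp only [hintegrand]
  rw [integral_div, integral_rpow_div_one_sub_mul_neg_log_rpow hs (by positivity),
    ← hurwitzS_eq_tsum, mul_div_mul_right _ _ hΓ]

/-- The `x`-th moment of the mixing density `f(p) = (-ln p)^(s-1)/(ζ(s)Γ(s)(1-p))`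
equals `1 - (1/ζ(s)) ∑_{i=0}^{x-1} (i+1)^(-s)`, which in turn equals
`ζ(s, x+1)/ζ(s)`. -/
theorem geometric_mixing_density_moments (s : ℝ) (hs : 1 < s) (x : ℕ) :
    (∫ p in Set.Ioo (0 : ℝ) 1,
        p ^ x * ((-Real.log p) ^ (s - 1) / (zetaS s * Real.Gamma s * (1 - p)))
      = 1 - (1 / zetaS s) * ∑ i ∈ Finset.range x, ((i : ℝ) + 1) ^ (-s)) ∧
    1 - (1 / zetaS s) * ∑ i ∈ Finset.range x, ((i : ℝ) + 1) ^ (-s)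
      = hurwitzS s x / zetaS s := by
  have htail : 1 - (1 / zetaS s) * ∑ i ∈ Finset.range x, ((i : ℝ) + 1) ^ (-s)
      = hurwitzS s x / zetaS s := by
    rw [one_div_mul_eq_div, one_sub_div (zetaS_pos hs).ne',
      sub_eq_of_eq_add' (sum_range_add_hurwitzS hs x).symm]
  exact ⟨(integral_pow_mul_zetaMixingDensity hs x).trans htail.symm, htail⟩
end

section
/- For every real s > 1, every real r > 1, and every natural number x, ∫₀¹ [Γ(r+x)/(Γ(r)Γ(x+1))] p^x (1-p)^r · [ (r-1) / (ζ(s) Γ(s) (1-p)^r) · ∫_p^1 (ω-p)^(r-2) (-ln ω)^(s-1) / ω^(r-1) dω ] dp = (x+1)^(-s) / ζ(s). That is, the Zeta(s) probability mass function is the continuous mixture of Negative Binomial(r,p) probability mass functions with mixing density f(p) = (r-1)/(ζ(s)Γ(s)(1-p)^r) · ∫_p^1 (ω-p)^(r-2) (-ln ω)^(s-1) / ω^(r-1) dω on (0,1). -/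
/-!
Integrating the mixing density against `p ^ x` and exchanging the order of integration makes the
inner integral a beta integral, `∫₀^ω p ^ x (ω - p) ^ (r - 2) dp = B(x + 1, r - 1) ω ^ (x + r - 1)`,
whose power of `ω` cancels the denominator `ω ^ (r - 1)`. The substitution `ω = exp (-t)` turns
what is left, `∫₀¹ ω ^ x (-log ω) ^ (s - 1) dω`, into the integral for `Γ(s) (x + 1) ^ (-s)`.
-/

open MeasureTheory

open Set ProbabilityTheory

section Triangle

variable {α E : Type*} [LinearOrder α] [TopologicalSpace α] [OrderClosedTopology α]
  [MeasurableSpace α] [OpensMeasurableSpace α] [NormedAddCommGroup E]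

lemma setIntegral_indicator_lt_right [NormedSpace ℝ E] (μ : Measure α) (F : α → α → E)
    {a b p : α} (hp : a ≤ p) :
    ∫ ω in Ioo a b, {z : α × α | z.1 < z.2}.indicator (Function.uncurry F) (p, ω) ∂μ =
      ∫ ω in Ioo p b, F p ω ∂μ := by
  change ∫ ω in Ioo a b, (Ioi p).indicator (F p) ω ∂μ = _
  rw [setIntegral_indicator measurableSet_Ioi, Ioo_inter_Ioi, sup_eq_right.2 hp]

lemma setIntegral_indicator_lt_left [NormedSpace ℝ E] (μ : Measure α) (F : α → α → E)
    {a b ω : α} (hω : ω ≤ b) :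
    ∫ p in Ioo a b, {z : α × α | z.1 < z.2}.indicator (Function.uncurry F) (p, ω) ∂μ =
      ∫ p in Ioo a ω, F p ω ∂μ := by
  change ∫ p in Ioo a b, (Iio ω).indicator (F · ω) p ∂μ = _
  rw [setIntegral_indicator measurableSet_Iio, Ioo_inter_Iio, inf_eq_right.2 hω]

variable [SecondCountableTopology α]

lemma integrable_indicator_lt_prod_restrict {μ ν : Measure α} [SFinite μ] [SFinite ν]
    {F : α → α → E} {a b : α}
    (hF : AEStronglyMeasurable (Function.uncurry F)
      ((μ.restrict (Ioo a b)).prod (ν.restrict (Ioo a b))))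
    (hF_left : ∀ ω ∈ Ioo a b, IntegrableOn (F · ω) (Ioo a ω) μ)
    (hF_norm : IntegrableOn (fun ω => ∫ p in Ioo a ω, ‖F p ω‖ ∂μ) (Ioo a b) ν) :
    Integrable ({z : α × α | z.1 < z.2}.indicator (Function.uncurry F))
      ((μ.restrict (Ioo a b)).prod (ν.restrict (Ioo a b))) := by
  refine (integrable_prod_iff' (hF.indicator measurableSet_lt')).2 ⟨?_, ?_⟩
  · filter_upwards [ae_restrict_mem measurableSet_Ioo] with ω hω
    change Integrable ((Iio ω).indicator (F · ω)) (μ.restrict (Ioo a b))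
    rw [integrable_indicator_iff measurableSet_Iio, IntegrableOn,
      Measure.restrict_restrict measurableSet_Iio, Iio_inter_Ioo, inf_eq_left.2 hω.2.le]
    exact hF_left ω hω
  · refine hF_norm.congr_fun (fun ω hω => ?_) measurableSet_Ioo
    simp only [norm_indicator_eq_indicator_norm]
    exact (setIntegral_indicator_lt_left μ (fun p ω => ‖F p ω‖) hω.2.le).symm

theorem setIntegral_Ioo_setIntegral_Ioo_swap [NormedSpace ℝ E] {μ ν : Measure α} [SFinite μ]
    [SFinite ν] {F : α → α → E} {a b : α}
    (hF : AEStronglyMeasurable (Function.uncurry F)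
      ((μ.restrict (Ioo a b)).prod (ν.restrict (Ioo a b))))
    (hF_left : ∀ ω ∈ Ioo a b, IntegrableOn (F · ω) (Ioo a ω) μ)
    (hF_norm : IntegrableOn (fun ω => ∫ p in Ioo a ω, ‖F p ω‖ ∂μ) (Ioo a b) ν) :
    ∫ p in Ioo a b, ∫ ω in Ioo p b, F p ω ∂ν ∂μ =
      ∫ ω in Ioo a b, ∫ p in Ioo a ω, F p ω ∂μ ∂ν := by
  have hint := integrable_indicator_lt_prod_restrict hF hF_left hF_norm
  rw [← setIntegral_congr_fun measurableSet_Ioo fun p hp =>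
      setIntegral_indicator_lt_right ν F hp.1.le,
    ← setIntegral_congr_fun measurableSet_Ioo fun ω hω =>
      setIntegral_indicator_lt_left μ F hω.2.le]
  exact integral_integral_swap hint

end Triangle

section BetaIntegral

variable {a b : ℝ}

lemma betaIntegral_ofReal (ha : 0 < a) (hb : 0 < b) :
    Complex.betaIntegral a b = (beta a b : ℂ) := by
  rw [Complex.betaIntegral_eq_Gamma_mul_div _ _ (by simpa) (by simpa), beta, ← Complex.ofReal_add]
  simp only [Complex.Gamma_ofReal, Complex.ofReal_mul, Complex.ofReal_div]

lemma Gamma_add_div_mul_mul_beta (ha : 0 < a) (hb : 0 < b) :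
    Real.Gamma (a + b) / (Real.Gamma (b + 1) * Real.Gamma a) * (b * beta a b) = 1 := by
  have hΓa := (Real.Gamma_pos_of_pos ha).ne'
  have hΓb := (Real.Gamma_pos_of_pos hb).ne'
  have hΓab := (Real.Gamma_pos_of_pos (add_pos ha hb)).ne'
  rw [beta, Real.Gamma_add_one hb.ne']
  field_simp

lemma setIntegral_Ioo_rpow_mul_sub_rpow (ha : 0 < a) (hb : 0 < b) {c : ℝ} (hc : 0 < c) :
    ∫ p in Ioo 0 c, p ^ (a - 1) * (c - p) ^ (b - 1) = c ^ (a + b - 1) * beta a b := by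
  have hscaled := Complex.betaIntegral_scaled a b hc
  rw [betaIntegral_ofReal ha hb, intervalIntegral.integral_of_le hc.le,
    integral_Ioc_eq_integral_Ioo] at hscaled
  apply Complex.ofReal_injective
  rw [← integral_complex_ofReal, Complex.ofReal_mul, Complex.ofReal_cpow hc.le]
  push_cast
  rw [← hscaled]
  refine setIntegral_congr_fun measurableSet_Ioo fun p hp => ?_
  simp only [Complex.ofReal_cpow hp.1.le, Complex.ofReal_cpow (sub_pos.2 hp.2).le]
  push_cast
  rfl

lemma integrableOn_Ioo_rpow_mul_sub_rpow (ha : 0 < a) (hb : 0 < b) {c : ℝ} (hc : 0 < c) :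
    IntegrableOn (fun p => p ^ (a - 1) * (c - p) ^ (b - 1)) (Ioo 0 c) := by
  refine Integrable.of_integral_ne_zero ?_
  rw [setIntegral_Ioo_rpow_mul_sub_rpow ha hb hc]
  exact (mul_pos (Real.rpow_pos_of_pos hc _) (beta_pos ha hb)).ne'

variable {E : Type*} [NormedAddCommGroup E] [NormedSpace ℝ E]

lemma setIntegral_norm_rpow_mul_sub_rpow_smul (ha : 0 < a) (hb : 0 < b) {c : ℝ} (hc : 0 < c)
    (v : E) :
    ∫ p in Ioo 0 c, ‖(p ^ (a - 1) * (c - p) ^ (b - 1)) • v‖ =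
      c ^ (a + b - 1) * beta a b * ‖v‖ := by
  rw [← setIntegral_Ioo_rpow_mul_sub_rpow ha hb hc, ← integral_mul_const]
  refine setIntegral_congr_fun measurableSet_Ioo fun p hp => ?_
  rw [norm_smul, Real.norm_of_nonneg (mul_nonneg (Real.rpow_nonneg hp.1.le _)
    (Real.rpow_nonneg (sub_pos.2 hp.2).le _))]

lemma aestronglyMeasurable_of_rpow_smul {μ : Measure ℝ} (hμ : ∀ᵐ ω ∂μ, 0 < ω) {g : ℝ → E} {e : ℝ}
    (hg : AEStronglyMeasurable (fun ω => ω ^ e • g ω) μ) : AEStronglyMeasurable g μ := by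
  have hpow : Measurable fun ω : ℝ => (ω ^ e)⁻¹ := by fun_prop
  refine (hpow.aestronglyMeasurable.smul hg).congr ?_
  filter_upwards [hμ] with ω hω
  exact inv_smul_smul₀ (Real.rpow_pos_of_pos hω e).ne' (g ω)

/-- The inner integral is `Γ(b)` times the Weyl fractional integral of order `b` of `g` cut off
at `c`, so this is the shift by `b` in its Mellin transform. -/
theorem setIntegral_rpow_smul_setIntegral_sub_rpow_smul [CompleteSpace E] (ha : 0 < a)
    (hb : 0 < b) {g : ℝ → E} {c : ℝ}
    (hg : IntegrableOn (fun ω => ω ^ (a + b - 1) • g ω) (Ioo 0 c)) :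
    ∫ p in Ioo 0 c, p ^ (a - 1) • ∫ ω in Ioo p c, (ω - p) ^ (b - 1) • g ω =
      beta a b • ∫ ω in Ioo 0 c, ω ^ (a + b - 1) • g ω := by
  have hmeas : AEStronglyMeasurable
      (Function.uncurry fun p ω => (p ^ (a - 1) * (ω - p) ^ (b - 1)) • g ω)
      ((volume.restrict (Ioo 0 c)).prod (volume.restrict (Ioo 0 c))) := by
    have hkernel : Measurable fun z : ℝ × ℝ => z.1 ^ (a - 1) * (z.2 - z.1) ^ (b - 1) := by fun_prop
    have hpos : ∀ᵐ ω ∂volume.restrict (Ioo 0 c), 0 < ω :=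
      (ae_restrict_mem measurableSet_Ioo).mono fun ω hω => hω.1
    exact hkernel.aestronglyMeasurable.smul
      (aestronglyMeasurable_of_rpow_smul hpos hg.aestronglyMeasurable).comp_snd
  have hleft (ω : ℝ) (hω : ω ∈ Ioo 0 c) :
      IntegrableOn (fun p => (p ^ (a - 1) * (ω - p) ^ (b - 1)) • g ω) (Ioo 0 ω) :=
    (integrableOn_Ioo_rpow_mul_sub_rpow ha hb hω.1).smul_const (g ω)
  have hnorm : IntegrableOn
      (fun ω => ∫ p in Ioo 0 ω, ‖(p ^ (a - 1) * (ω - p) ^ (b - 1)) • g ω‖) (Ioo 0 c) := by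
    refine IntegrableOn.congr_fun (hg.norm.const_mul (beta a b)) (fun ω hω => ?_)
      measurableSet_Ioo
    rw [setIntegral_norm_rpow_mul_sub_rpow_smul ha hb hω.1, norm_smul,
      Real.norm_of_nonneg (Real.rpow_nonneg hω.1.le _)]
    ring
  calc ∫ p in Ioo 0 c, p ^ (a - 1) • ∫ ω in Ioo p c, (ω - p) ^ (b - 1) • g ω
      = ∫ p in Ioo 0 c, ∫ ω in Ioo p c, (p ^ (a - 1) * (ω - p) ^ (b - 1)) • g ω := by
        simp only [mul_smul, integral_smul]
    _ = ∫ ω in Ioo 0 c, ∫ p in Ioo 0 ω, (p ^ (a - 1) * (ω - p) ^ (b - 1)) • g ω :=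
        setIntegral_Ioo_setIntegral_Ioo_swap hmeas hleft hnorm
    _ = ∫ ω in Ioo 0 c, beta a b • ω ^ (a + b - 1) • g ω := by
        refine setIntegral_congr_fun measurableSet_Ioo fun ω hω => ?_
        rw [integral_smul_const, setIntegral_Ioo_rpow_mul_sub_rpow ha hb hω.1, mul_comm, mul_smul]
    _ = beta a b • ∫ ω in Ioo 0 c, ω ^ (a + b - 1) • g ω := integral_smul _ _

end BetaIntegral

section LogIntegral

lemma setIntegral_Ioo_zero_one_eq_setIntegral_Ioi_exp_neg {E : Type*} [NormedAddCommGroup E]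
    [NormedSpace ℝ E] (f : ℝ → E) :
    ∫ ω in Ioo (0 : ℝ) 1, f ω = ∫ t in Ioi (0 : ℝ), Real.exp (-t) • f (Real.exp (-t)) := by
  have himage : Real.exp '' Iio 0 = Ioo 0 1 := by rw [Real.image_exp_Iio, Real.exp_zero]
  rw [← himage, integral_image_eq_integral_abs_deriv_smul measurableSet_Iio
      (fun t _ => (Real.hasDerivAt_exp t).hasDerivWithinAt) Real.exp_injective.injOn,
    integral_comp_neg_Ioi (0 : ℝ) fun t => Real.exp t • f (Real.exp t), neg_zero,
    integral_Iic_eq_integral_Iio]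
  simp only [Real.abs_exp]

variable {s x : ℝ}

lemma setIntegral_Ioo_rpow_mul_neg_log_rpow (hs : 0 < s) (hx : -1 < x) :
    ∫ ω in Ioo (0 : ℝ) 1, ω ^ x * (-Real.log ω) ^ (s - 1) =
      Real.Gamma s * (x + 1) ^ (-s) := by
  have hx' : 0 < x + 1 := by linarith
  have hexp (t : ℝ) : Real.exp (-t) * Real.exp (-t) ^ x = Real.exp (-((x + 1) * t)) := by
    rw [← Real.exp_mul, ← Real.exp_add]
    ring_nf
  calc ∫ ω in Ioo (0 : ℝ) 1, ω ^ x * (-Real.log ω) ^ (s - 1)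
      = ∫ t in Ioi (0 : ℝ), t ^ (s - 1) * Real.exp (-((x + 1) * t)) := by
        rw [setIntegral_Ioo_zero_one_eq_setIntegral_Ioi_exp_neg]
        simp only [Real.log_exp, neg_neg, smul_eq_mul, ← mul_assoc, hexp]
        simp only [mul_comm]
    _ = (1 / (x + 1)) ^ s * Real.Gamma s := Real.integral_rpow_mul_exp_neg_mul_Ioi hs hx'
    _ = Real.Gamma s * (x + 1) ^ (-s) := by
        rw [one_div, Real.inv_rpow hx'.le, Real.rpow_neg hx'.le, mul_comm]

lemma integrableOn_Ioo_rpow_mul_neg_log_rpow (hs : 0 < s) (hx : -1 < x) :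
    IntegrableOn (fun ω => ω ^ x * (-Real.log ω) ^ (s - 1)) (Ioo 0 1) := by
  refine Integrable.of_integral_ne_zero ?_
  rw [setIntegral_Ioo_rpow_mul_neg_log_rpow hs hx]
  exact (mul_pos (Real.Gamma_pos_of_pos hs) (Real.rpow_pos_of_pos (by linarith) _)).ne'

theorem setIntegral_rpow_mul_setIntegral_sub_rpow_mul_neg_log_rpow {r : ℝ} (hs : 0 < s)
    (hr : 1 < r) (hx : -1 < x) :
    ∫ p in Ioo (0 : ℝ) 1, p ^ x *
        ∫ ω in Ioo p 1, (ω - p) ^ (r - 2) * (-Real.log ω) ^ (s - 1) / ω ^ (r - 1) =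
      beta (x + 1) (r - 1) * (Real.Gamma s * (x + 1) ^ (-s)) := by
  have hcancel : EqOn (fun ω => ω ^ x * (-Real.log ω) ^ (s - 1))
      (fun ω => ω ^ (x + 1 + (r - 1) - 1) • ((-Real.log ω) ^ (s - 1) / ω ^ (r - 1)))
      (Ioo 0 1) := by
    intro ω hω
    have hpow : ω ^ (r - 1) ≠ 0 := (Real.rpow_pos_of_pos hω.1 _).ne'
    have hexponent : x + 1 + (r - 1) - 1 = x + (r - 1) := by ring
    simp only [hexponent, Real.rpow_add hω.1, smul_eq_mul]
    field_simp
  have hmellin := setIntegral_rpow_smul_setIntegral_sub_rpow_smul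
    (neg_lt_iff_pos_add.1 hx) (sub_pos.2 hr)
    ((integrableOn_Ioo_rpow_mul_neg_log_rpow hs hx).congr_fun hcancel measurableSet_Ioo)
  rw [← setIntegral_congr_fun measurableSet_Ioo hcancel,
    setIntegral_Ioo_rpow_mul_neg_log_rpow hs hx] at hmellin
  have hexponent : r - 1 - 1 = r - 2 := by ring
  simpa only [smul_eq_mul, add_sub_cancel_right, hexponent, mul_div_assoc] using hmellin

end LogIntegral

theorem zeta_as_negBinomial_mixture_r_gt_one_general {s r x : ℝ} (hs : 1 < s) (hr : 1 < r)
    (hx : -1 < x) :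
    ∫ p in Ioo (0 : ℝ) 1,
      (Real.Gamma (r + x) / (Real.Gamma r * Real.Gamma (x + 1))) * p ^ x * (1 - p) ^ r *
        ((r - 1) / (zetaS s * Real.Gamma s * (1 - p) ^ r) *
          ∫ ω in Ioo p 1, (ω - p) ^ (r - 2) * (-Real.log ω) ^ (s - 1) / ω ^ (r - 1))
      = (x + 1) ^ (-s) / zetaS s := by
  set I : ℝ → ℝ := fun p =>
    ∫ ω in Ioo p 1, (ω - p) ^ (r - 2) * (-Real.log ω) ^ (s - 1) / ω ^ (r - 1)
  set C := Real.Gamma (r + x) / (Real.Gamma r * Real.Gamma (x + 1))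
  have hfactor : EqOn
      (fun p => C * p ^ x * (1 - p) ^ r * ((r - 1) / (zetaS s * Real.Gamma s * (1 - p) ^ r) * I p))
      (fun p => C * ((r - 1) / (zetaS s * Real.Gamma s)) * (p ^ x * I p)) (Ioo 0 1) := by
    intro p hp
    have hpow : (1 - p) ^ r ≠ 0 := (Real.rpow_pos_of_pos (sub_pos.2 hp.2) _).ne'
    simp only [← div_div]
    field_simp
  have hΓs : Real.Gamma s ≠ 0 := (Real.Gamma_pos_of_pos (by linarith)).ne'
  have hbeta : C * ((r - 1) * beta (x + 1) (r - 1)) = 1 := by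
    have hexponent : x + 1 + (r - 1) = r + x := by ring
    simpa only [hexponent, sub_add_cancel] using
      Gamma_add_div_mul_mul_beta (neg_lt_iff_pos_add.1 hx) (sub_pos.2 hr)
  rw [setIntegral_congr_fun measurableSet_Ioo hfactor, integral_const_mul,
    setIntegral_rpow_mul_setIntegral_sub_rpow_mul_neg_log_rpow (by linarith) hr hx]
  calc C * ((r - 1) / (zetaS s * Real.Gamma s)) *
        (beta (x + 1) (r - 1) * (Real.Gamma s * (x + 1) ^ (-s)))
      = C * ((r - 1) * beta (x + 1) (r - 1)) * ((x + 1) ^ (-s) / zetaS s) := by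
        field_simp
    _ = (x + 1) ^ (-s) / zetaS s := by rw [hbeta, one_mul]

/-- The Zeta(s) pmf is the continuous mixture of Negative Binomial(r,p) pmfs,
for fixed shape `r > 1`, with mixing density
`f(p) = (r-1)/(ζ(s)Γ(s)(1-p)^r) ∫_p^1 (ω-p)^(r-2)(-ln ω)^(s-1)/ω^(r-1) dω`. -/
theorem zeta_as_negBinomial_mixture_r_gt_one (s : ℝ) (hs : 1 < s)
    (r : ℝ) (hr : 1 < r) (x : ℕ) :
    ∫ p in Set.Ioo (0 : ℝ) 1,
      (Real.Gamma (r + x) / (Real.Gamma r * Real.Gamma ((x : ℝ) + 1))) *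
        p ^ x * (1 - p) ^ r *
        ((r - 1) / (zetaS s * Real.Gamma s * (1 - p) ^ r) *
          ∫ ω in Set.Ioo p 1,
            (ω - p) ^ (r - 2) * (-Real.log ω) ^ (s - 1) / ω ^ (r - 1))
      = ((x : ℝ) + 1) ^ (-s) / zetaS s := by
  simpa only [Real.rpow_natCast] using
    zeta_as_negBinomial_mixture_r_gt_one_general hs hr (neg_one_lt_zero.trans_le x.cast_nonneg)
end
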